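/- Nash–Williams inequality: Let G=(V,E) be a finite network with positive conductances c_e, let a ≠ z be vertices, and let Γ_1, …, Γ_N ⊆ E be pairwise disjoint cutsets, each separating a from z. Then R_eff(a ↔ z) ≥ Σ_{n=1}^N ( Σ_{e ∈ Γ_n} c_e )^{−1}. Equivalently, every flow θ from a to z of strength 1 satisfies E(θ) ≥ Σ_{n=1}^N ( Σ_{e ∈ Γ_n} c_e )^{−1}. -/

import Mathlib

/-!
The Nash–Williams inequality (flow form).

The finite network is a finite connected simple graph `G` with positive
conductances `c e` on the (undirected) edges `e : Sym2 V`; resistances are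
`(c e)⁻¹`.  A flow from `a` to `z` is an antisymmetric function
`θ : V → V → ℝ` vanishing on non-adjacent pairs and satisfying the node law
away from `a, z`; since `θ` vanishes off edges, sums over all vertices agree
with sums over neighbours.  Its energy is `∑_{e={x,y}∈E} r_e θ(x,y)², `
written below as `(1/2) * ∑ x, ∑ y, θ x y ^ 2 / c s(x,y)` (off-edge terms
vanish since there `θ x y = 0`).  A cutset `Γ` separating `a` from `z` is a
set of edges met by every path from `a` to `z`.
-/

open Finset

variable {V : Type} [Fintype V] [DecidableEq V]

/-- `θ` is a flow from `a` to `z` in `G`. -/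
def IsFlow (G : SimpleGraph V) (a z : V) (θ : V → V → ℝ) : Prop :=
  (∀ x y, θ x y = -θ y x) ∧
  (∀ x y, ¬G.Adj x y → θ x y = 0) ∧
  (∀ x, x ≠ a → x ≠ z → ∑ y, θ x y = 0)

/-- The energy of a flow with respect to conductances `c` on the edges. -/
noncomputable def flowEnergy (c : Sym2 V → ℝ) (θ : V → V → ℝ) : ℝ :=
  (1 / 2) * ∑ u, ∑ v, θ u v ^ 2 / c s(u, v)

/-- A finite vertex set containing `a` but not `z` has net outflow one. -/
lemma cut_flow (G : SimpleGraph V) (a z : V) (θ : V → V → ℝ) (hθ : IsFlow G a z θ)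
    (hs : ∑ v, θ a v = 1) (S : Finset V) (ha : a ∈ S) (hz : z ∉ S) :
    ∑ p ∈ S ×ˢ Sᶜ, θ p.1 p.2 = 1 := by
  obtain ⟨hanti, -, hnode⟩ := hθ
  have h1 : ∑ u ∈ S, ∑ v, θ u v = 1 := by
    rw [Finset.sum_eq_single_of_mem a ha, hs]
    intro b hb hba
    exact hnode b hba (fun h => hz (h ▸ hb))
  have h2 : ∑ u ∈ S, ∑ v ∈ S, θ u v = 0 := by
    have h3 : ∑ u ∈ S, ∑ v ∈ S, θ u v = -∑ u ∈ S, ∑ v ∈ S, θ u v := by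
      conv_lhs => rw [Finset.sum_comm]
      rw [← Finset.sum_neg_distrib]
      refine Finset.sum_congr rfl fun u _ => ?_
      rw [← Finset.sum_neg_distrib]
      exact Finset.sum_congr rfl fun v _ => hanti v u
    linarith
  rw [Finset.sum_product]
  have h4 : ∑ u ∈ S, ∑ v, θ u v = ∑ u ∈ S, ∑ v ∈ S, θ u v + ∑ u ∈ S, ∑ v ∈ Sᶜ, θ u v := by
    rw [← Finset.sum_add_distrib]
    exact Finset.sum_congr rfl fun u _ => (Finset.sum_add_sum_compl S _).symm
  linarith

/-- Energy of a single undirected edge. -/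
noncomputable def edgeEnergy (c : Sym2 V → ℝ) (θ : V → V → ℝ) (h : ∀ x y, θ x y = -θ y x) :
    Sym2 V → ℝ :=
  Sym2.lift ⟨fun u v => θ u v ^ 2 / c s(u, v), fun u v => by
    show θ u v ^ 2 / c s(u, v) = θ v u ^ 2 / c s(v, u)
    rw [h u v, Sym2.eq_swap, neg_sq]⟩

lemma edgeEnergy_mk (c : Sym2 V → ℝ) (θ : V → V → ℝ) (h : ∀ x y, θ x y = -θ y x) (u v : V) :
    edgeEnergy c θ h s(u, v) = θ u v ^ 2 / c s(u, v) := rfl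

lemma edgeEnergy_nonneg (G : SimpleGraph V) (c : Sym2 V → ℝ) (hc : ∀ e ∈ G.edgeSet, 0 < c e)
    (a z : V) (θ : V → V → ℝ) (hθ : IsFlow G a z θ) (e : Sym2 V) :
    0 ≤ edgeEnergy c θ hθ.1 e := by
  induction e using Sym2.ind with
  | _ u v =>
    rw [edgeEnergy_mk]
    by_cases hadj : G.Adj u v
    · have := hc s(u, v) hadj
      positivity
    · simp [hθ.2.1 u v hadj]

/-- The energy bound for a single cutset. -/
lemma single_cut (G : SimpleGraph V)
    (c : Sym2 V → ℝ) (hc : ∀ e ∈ G.edgeSet, 0 < c e)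
    (a z : V) (Γ : Finset (Sym2 V))
    (hΓ : (Γ : Set (Sym2 V)) ⊆ G.edgeSet)
    (hcut : ∀ p : G.Walk a z, p.IsPath → ∃ e ∈ Γ, e ∈ p.edges)
    (θ : V → V → ℝ) (hθ : IsFlow G a z θ) (hs : ∑ v, θ a v = 1) :
    (∑ e ∈ Γ, c e)⁻¹ ≤ ∑ e ∈ Γ, edgeEnergy c θ hθ.1 e := by
  classical
  set H := G.deleteEdges (Γ : Set (Sym2 V)) with hH
  have hle : H ≤ G := G.deleteEdges_le _
  set S : Finset V := Finset.univ.filter (fun v => H.Reachable a v) with hS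
  have ha : a ∈ S := by simp [hS]
  have hz : z ∉ S := by
    intro h
    have hr : H.Reachable a z := by simpa [hS] using h
    obtain ⟨p, hp⟩ := hr.exists_isPath
    obtain ⟨e, he, hep⟩ := hcut (p.mapLe hle) (hp.mapLe hle)
    have hep' : e ∈ p.edges := by simpa using hep
    have := p.edges_subset_edgeSet hep'
    rw [hH, SimpleGraph.edgeSet_deleteEdges] at this
    exact this.2 he
  have hflow := cut_flow G a z θ hθ hs S ha hz
  set B := (S ×ˢ Sᶜ).filter (fun p => s(p.1, p.2) ∈ Γ) with hB
  have hBsum : ∑ p ∈ B, θ p.1 p.2 = 1 := by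
    rw [← hflow]
    refine Finset.sum_subset (Finset.filter_subset _ _) ?_
    rintro ⟨u, v⟩ hp hpB
    apply hθ.2.1
    intro hadj
    have hu : H.Reachable a u := by simpa [hS] using (Finset.mem_product.1 hp).1
    have hv : ¬ H.Reachable a v := by simpa [hS] using (Finset.mem_product.1 hp).2
    have hn : s(u, v) ∉ Γ := fun h => hpB (Finset.mem_filter.2 ⟨hp, h⟩)
    apply hv
    refine hu.trans (SimpleGraph.Adj.reachable ?_)
    rw [hH, SimpleGraph.deleteEdges_adj]
    exact ⟨hadj, by simpa using hn⟩
  have hmem : ∀ p ∈ B, s(p.1, p.2) ∈ Γ := fun p hp => (Finset.mem_filter.1 hp).2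
  have hinj : Set.InjOn (fun p : V × V => s(p.1, p.2)) (B : Set (V × V)) := by
    rintro ⟨u, v⟩ hp ⟨u', v'⟩ hq h
    have h1 := Finset.mem_product.1 (Finset.mem_filter.1 hp).1
    have h2 := Finset.mem_product.1 (Finset.mem_filter.1 hq).1
    rcases Sym2.eq_iff.1 h with ⟨h3, h4⟩ | ⟨h3, h4⟩
    · exact Prod.ext h3 h4
    · exfalso
      simp only at h1 h2 h3 h4
      rw [← h3] at h2
      exact (Finset.mem_compl.1 h2.2) h1.1
  have hle_sum : ∀ g : Sym2 V → ℝ, (∀ e ∈ Γ, 0 ≤ g e) →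
      ∑ p ∈ B, g s(p.1, p.2) ≤ ∑ e ∈ Γ, g e := by
    intro g hg
    rw [← Finset.sum_image (f := g) hinj]
    refine Finset.sum_le_sum_of_subset_of_nonneg ?_ (fun e he _ => hg e he)
    intro e he
    obtain ⟨p, hp, rfl⟩ := Finset.mem_image.1 he
    exact hmem p hp
  have hcΓ : ∀ e ∈ Γ, 0 < c e := fun e he => hc e (hΓ he)
  have hE := edgeEnergy_nonneg G c hc a z θ hθ
  have hCS := Finset.sum_sq_le_sum_mul_sum_of_sq_eq_mul B
    (r := fun p => θ p.1 p.2) (f := fun p => edgeEnergy c θ hθ.1 s(p.1, p.2))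
    (g := fun p => c s(p.1, p.2))
    (fun p _ => hE _) (fun p hp => (hcΓ _ (hmem p hp)).le)
    (fun p hp => by
      have := (hcΓ _ (hmem p hp)).ne'
      rw [edgeEnergy_mk]
      field_simp)
  rw [hBsum] at hCS
  have h1 := hle_sum _ (fun e _ => hE e)
  have h2 := hle_sum c (fun e he => (hcΓ e he).le)
  have hC0 : 0 ≤ ∑ p ∈ B, c s(p.1, p.2) :=
    Finset.sum_nonneg fun p hp => (hcΓ _ (hmem p hp)).le
  have hF0 : 0 ≤ ∑ e ∈ Γ, edgeEnergy c θ hθ.1 e := Finset.sum_nonneg fun e _ => hE e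
  have h3 := mul_le_mul h1 h2 hC0 hF0
  have hpos : 0 < ∑ e ∈ Γ, c e := by
    rcases (Finset.sum_nonneg fun e he => (hcΓ e he).le).lt_or_eq with h | h
    · exact h
    · rw [← h] at h3
      linarith
  rw [inv_eq_one_div, div_le_iff₀ hpos]
  linarith

/-- Total energy dominates the energy carried by any set of edges. -/
lemma energy_ge (G : SimpleGraph V) (c : Sym2 V → ℝ) (hc : ∀ e ∈ G.edgeSet, 0 < c e)
    (a z : V) (θ : V → V → ℝ) (hθ : IsFlow G a z θ) (U : Finset (Sym2 V))
    (hU : (U : Set (Sym2 V)) ⊆ G.edgeSet) :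
    ∑ e ∈ U, edgeEnergy c θ hθ.1 e ≤ flowEnergy c θ := by
  have hE := edgeEnergy_nonneg G c hc a z θ hθ
  have h1 : ∑ u, ∑ v, θ u v ^ 2 / c s(u, v)
      = ∑ e : Sym2 V, ∑ p : V × V with s(p.1, p.2) = e, edgeEnergy c θ hθ.1 s(p.1, p.2) := by
    rw [Finset.sum_fiberwise, Fintype.sum_prod_type]
    rfl
  have h2 : ∑ e ∈ U, 2 * edgeEnergy c θ hθ.1 e
      ≤ ∑ e : Sym2 V, ∑ p : V × V with s(p.1, p.2) = e, edgeEnergy c θ hθ.1 s(p.1, p.2) := by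
    refine le_trans (Finset.sum_le_sum ?_) (Finset.sum_le_sum_of_subset_of_nonneg
      (Finset.subset_univ U) fun e _ _ => Finset.sum_nonneg fun p _ => hE _)
    intro e he
    have hadj := hU he
    induction e using Sym2.ind with
    | _ x y =>
      have hxy : x ≠ y := G.ne_of_adj hadj
      have hne : (x, y) ≠ (y, x) := fun h => hxy (Prod.ext_iff.1 h).1
      have hsub : ({(x, y), (y, x)} : Finset (V × V)) ⊆
          Finset.univ.filter (fun p : V × V => s(p.1, p.2) = s(x, y)) := by
        intro p hp
        rcases Finset.mem_insert.1 hp with rfl | hp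
        · simp
        · rw [Finset.mem_singleton.1 hp]
          simp
      refine le_trans (le_of_eq ?_) (Finset.sum_le_sum_of_subset_of_nonneg hsub
        fun p _ _ => hE _)
      rw [Finset.sum_pair hne]
      simp only
      rw [Sym2.eq_swap (a := y) (b := x)]
      ring
  rw [← Finset.mul_sum, ← h1] at h2
  unfold flowEnergy
  linarith

/-- **Nash–Williams inequality**: if `Γ 0, …, Γ (N-1)` are pairwise disjoint
cutsets separating `a` from `z`, then every unit flow from `a` to `z` has
energy at least `∑ n, (∑_{e ∈ Γ n} c e)⁻¹`; equivalently
`R_eff(a ↔ z) ≥ ∑ n, (∑_{e ∈ Γ n} c e)⁻¹`. -/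
theorem nash_williams (G : SimpleGraph V) (hG : G.Connected)
    (c : Sym2 V → ℝ) (hc : ∀ e ∈ G.edgeSet, 0 < c e)
    (a z : V) (haz : a ≠ z)
    (N : ℕ) (Γ : Fin N → Finset (Sym2 V))
    (hΓ : ∀ n, (Γ n : Set (Sym2 V)) ⊆ G.edgeSet)
    (hdisj : ∀ m n, m ≠ n → Disjoint (Γ m) (Γ n))
    (hcut : ∀ n, ∀ p : G.Walk a z, p.IsPath → ∃ e ∈ Γ n, e ∈ p.edges)
    (θ : V → V → ℝ) (hθ : IsFlow G a z θ) (hstrength : ∑ v, θ a v = 1) :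
    ∑ n : Fin N, (∑ e ∈ Γ n, c e)⁻¹ ≤ flowEnergy c θ := by
  calc ∑ n : Fin N, (∑ e ∈ Γ n, c e)⁻¹
      ≤ ∑ n : Fin N, ∑ e ∈ Γ n, edgeEnergy c θ hθ.1 e :=
        Finset.sum_le_sum fun n _ =>
          single_cut G c hc a z (Γ n) (hΓ n) (hcut n) θ hθ hstrength
    _ = ∑ e ∈ Finset.univ.biUnion Γ, edgeEnergy c θ hθ.1 e :=
        (Finset.sum_biUnion fun m _ n _ hmn => hdisj m n hmn).symm
    _ ≤ flowEnergy c θ := by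
        refine energy_ge G c hc a z θ hθ _ ?_
        intro e he
        obtain ⟨n, -, hn⟩ := Finset.mem_biUnion.1 (Finset.mem_coe.1 he)
        exact hΓ n hn
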